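/- Assume γ is non-oscillating at O, let m, β be as in the Kurdyka–Mostowski–Parusiński expansion along γ and ν the limit of secants, and assume in addition that |x|^{2−m}·‖Hs(f)(x)‖ converges to a positive finite limit as x → O along γ. Then the rescaled Hessian (m(m−1)·|x|^{m−2})^{−1}·Hs(f)(x) converges as x → O along γ to a nonzero self-adjoint operator 𝓗₀, and the eigen-value of 𝓗₀ in the direction ν is exactly −β: 𝓗₀·ν = −β·ν. -/

import Mathlib

open scoped RealInnerProductSpace Topology
open Filter

/-!
Along a non-oscillating trajectory every linear functional of an analytic vector-valued map has a
constant sign, so the direction of the map converges. This applies both to `∇ f` and to the Hessian,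
whose rescaling therefore converges to an operator `A`. L'Hôpital's rule along `γ` then identifies
two limits: the secant direction `ν` is opposite to the limit velocity, and `|x|^(1-m) • ∇ f x`
tends to `(m-1)⁻¹ • A ν`. The latter limit is a multiple of `ν` because `∇ f` is asymptotically
directed along `-ν`, and its radial component `-mβ` gives `A ν = -m(m-1)β • ν`.
-/

section Direction

variable {α : Type*} {l : Filter α} {G : Type*} [NormedAddCommGroup G] [NormedSpace ℝ G]

theorem eq_of_mem_span_add_of_norm_eq {u v : G} (hu : u ≠ 0) (hnorm : ‖u‖ = ‖v‖)
    (hmem : u ∈ Submodule.span ℝ {u + v}) : u = v := by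
  obtain ⟨a, ha⟩ := Submodule.mem_span_singleton.1 hmem
  have hcol : (1 - a) • u = a • v := by
    rw [sub_smul, one_smul, sub_eq_iff_eq_add, add_comm, ← smul_add, ha]
  have habs : |1 - a| = |a| := by
    refine mul_right_cancel₀ (norm_ne_zero_iff.2 hu) ?_
    simpa only [norm_smul, Real.norm_eq_abs, ← hnorm] using congrArg norm hcol
  have ha' : a = 1 / 2 := by
    rcases abs_eq_abs.1 habs with h | h <;> linarith
  subst ha'
  refine smul_right_injective G (by norm_num : (1 / 2 : ℝ) ≠ 0) ?_
  simpa only [show (1 - 1 / 2 : ℝ) = 1 / 2 by norm_num] using hcol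

theorem exists_dual_apply_eq_neg_apply_and_pos [FiniteDimensional ℝ G] {u v : G} (hu : u ≠ 0)
    (hnorm : ‖u‖ = ‖v‖) (huv : u ≠ v) : ∃ φ : StrongDual ℝ G, φ v = -φ u ∧ 0 < φ u := by
  obtain ⟨φ, hφu, hφ⟩ := Submodule.exists_le_ker_of_notMem
    fun hmem ↦ huv (eq_of_mem_span_add_of_norm_eq hu hnorm hmem)
  have hφv : φ v = -φ u := by
    have : φ (u + v) = 0 := hφ (Submodule.mem_span_singleton_self _)
    rw [map_add] at this
    linarith
  rcases hφu.lt_or_gt with hneg | hpos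
  · exact ⟨-φ.toContinuousLinearMap, by simp [hφv], by simpa using hneg⟩
  · exact ⟨φ.toContinuousLinearMap, hφv, hpos⟩

/- Two distinct cluster points on the unit sphere would be strictly separated by a linear
functional, which would then change sign infinitely often. -/
theorem exists_tendsto_normalize_of_dual_sign [FiniteDimensional ℝ G] {F : α → G}
    (hF : ∀ᶠ a in l, F a ≠ 0)
    (hsign : ∀ φ : StrongDual ℝ G, (∀ᶠ a in l, φ (F a) ≤ 0) ∨ ∀ᶠ a in l, 0 ≤ φ (F a)) :
    ∃ u, Tendsto (fun a ↦ NormedSpace.normalize (F a)) l (𝓝 u) := by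
  rcases l.eq_or_neBot with rfl | _
  · exact ⟨0, tendsto_bot⟩
  have hsphere : ∀ᶠ a in l, NormedSpace.normalize (F a) ∈ Metric.sphere (0 : G) 1 := by
    filter_upwards [hF] with a ha
    simpa using ha
  have hcompact : IsCompact (Metric.sphere (0 : G) 1) := isCompact_sphere 0 1
  obtain ⟨u, hu, hcu⟩ := hcompact.exists_mapClusterPt (tendsto_principal.2 hsphere)
  refine ⟨u, hcompact.tendsto_nhds_of_unique_mapClusterPt hsphere fun v hv hcv ↦ ?_⟩
  by_contra hvu
  rw [mem_sphere_zero_iff_norm] at hu hv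
  obtain ⟨φ, hφv, hφu⟩ := exists_dual_apply_eq_neg_apply_and_pos
    (norm_ne_zero_iff.1 (by simp [hu])) (hu.trans hv.symm) (Ne.symm hvu)
  rcases hsign φ with hnonpos | hnonneg
  · obtain ⟨a, ha, ha'⟩ := ((hcu.frequently (φ.continuous.tendsto u |>.eventually_const_lt hφu))
      |>.and_eventually hnonpos).exists
    rw [NormedSpace.normalize, map_smul, smul_eq_mul] at ha
    exact ha.not_ge (mul_nonpos_of_nonneg_of_nonpos (by positivity) ha')
  · obtain ⟨a, ha, ha'⟩ := ((hcv.frequently (φ.continuous.tendsto v |>.eventually_lt_const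
      (by rw [hφv]; exact neg_neg_of_pos hφu))) |>.and_eventually hnonneg).exists
    rw [NormedSpace.normalize, map_smul, smul_eq_mul] at ha
    exact ha.not_ge (mul_nonneg (by positivity) ha')

theorem norm_eq_one_of_tendsto_normalize [l.NeBot] {F : α → G} {u : G} (hF : ∀ᶠ a in l, F a ≠ 0)
    (hu : Tendsto (fun a ↦ NormedSpace.normalize (F a)) l (𝓝 u)) : ‖u‖ = 1 :=
  tendsto_nhds_unique hu.norm
    (tendsto_const_nhds.congr' (hF.mono fun _ ha ↦ (NormedSpace.norm_normalize ha).symm))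

theorem eq_norm_smul_of_tendsto_normalize [l.NeBot] {F : α → G} {r : α → ℝ} {u z : G}
    (hr : ∀ᶠ a in l, 0 < r a) (hu : Tendsto (fun a ↦ NormedSpace.normalize (F a)) l (𝓝 u))
    (hz : Tendsto (fun a ↦ r a • F a) l (𝓝 z)) : z = ‖z‖ • u := by
  refine tendsto_nhds_unique (hz.congr' ?_) (hz.norm.smul hu)
  filter_upwards [hr] with a ha
  rw [← NormedSpace.normalize_smul_of_pos ha, NormedSpace.norm_smul_normalize]

theorem continuousAt_normalize {x : G} (hx : x ≠ 0) :
    ContinuousAt (NormedSpace.normalize : G → G) x :=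
  (continuousAt_id.norm.inv₀ (norm_ne_zero_iff.2 hx)).smul continuousAt_id

end Direction

section LHopital

variable {G : Type*} [NormedAddCommGroup G] [NormedSpace ℝ G] {L : ℝ}

theorem norm_le_of_norm_deriv_le_neg_deriv {F F' : ℝ → G} {g g' : ℝ → ℝ} {a : ℝ}
    (hF : ∀ t ∈ Set.Ioo a L, HasDerivAt F (F' t) t) (hg : ∀ t ∈ Set.Ioo a L, HasDerivAt g (g' t) t)
    (hle : ∀ t ∈ Set.Ioo a L, ‖F' t‖ ≤ -g' t) (hF0 : Tendsto F (𝓝[<] L) (𝓝 0))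
    (hg0 : Tendsto g (𝓝[<] L) (𝓝 0)) {s : ℝ} (hs : s ∈ Set.Ioo a L) : ‖F s‖ ≤ g s := by
  have hincr : ∀ t ∈ Set.Ioo s L, ‖F t - F s‖ ≤ g s - g t := fun t ht ↦ by
    have hsub : Set.Icc s t ⊆ Set.Ioo a L := Set.Icc_subset_Ioo hs.1 ht.2
    have hdF : ∀ r ∈ Set.Icc s t, HasDerivAt (F · - F s) (F' r) r :=
      fun r hr ↦ (hF r (hsub hr)).sub_const _
    have hdg : ∀ r ∈ Set.Icc s t, HasDerivAt (g s - g ·) (-g' r) r :=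
      fun r hr ↦ (hg r (hsub hr)).const_sub _
    exact image_norm_le_of_norm_deriv_right_le_deriv_boundary'
      (fun r hr ↦ (hdF r hr).continuousAt.continuousWithinAt)
      (fun r hr ↦ (hdF r (Set.Ico_subset_Icc_self hr)).hasDerivWithinAt) (by simp)
      (fun r hr ↦ (hdg r hr).continuousAt.continuousWithinAt)
      (fun r hr ↦ (hdg r (Set.Ico_subset_Icc_self hr)).hasDerivWithinAt)
      (fun r hr ↦ hle r (hsub (Set.Ico_subset_Icc_self hr))) (Set.right_mem_Icc.2 ht.1.le)
  have hlim := le_of_tendsto_of_tendsto (hF0.sub_const (F s)).norm (hg0.const_sub (g s))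
    (mem_of_superset (Ioo_mem_nhdsLT hs.2) hincr)
  simpa using hlim

theorem eventually_pos_of_deriv_neg_of_tendsto_zero {g g' : ℝ → ℝ}
    (hg : ∀ᶠ s in 𝓝[<] L, HasDerivAt g (g' s) s) (hneg : ∀ᶠ s in 𝓝[<] L, g' s < 0)
    (hg0 : Tendsto g (𝓝[<] L) (𝓝 0)) : ∀ᶠ s in 𝓝[<] L, 0 < g s := by
  obtain ⟨a, ha, hsub⟩ := mem_nhdsLT_iff_exists_Ioo_subset.1 (hg.and hneg)
  have hanti : StrictAntiOn g (Set.Ioo a L) := strictAntiOn_of_deriv_neg (convex_Ioo a L)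
    (fun s hs ↦ (hsub hs).1.continuousAt.continuousWithinAt) fun s hs ↦ by
      rw [interior_Ioo] at hs
      exact (hsub hs).1.deriv ▸ (hsub hs).2
  filter_upwards [Ioo_mem_nhdsLT ha] with s hs
  obtain ⟨t, hst, htL⟩ := exists_between hs.2
  have ht : t ∈ Set.Ioo a L := ⟨hs.1.trans hst, htL⟩
  have hgt : 0 ≤ g t := le_of_tendsto hg0 <| by
    filter_upwards [Ioo_mem_nhdsLT htL] with r hr using (hanti ht ⟨ht.1.trans hr.1, hr.2⟩ hr.1).le
  exact hgt.trans_lt (hanti hs ht hst)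

theorem vector_lhopital_zero_nhdsLT {F F' : ℝ → G} {g g' : ℝ → ℝ} {y : G}
    (hF : ∀ᶠ s in 𝓝[<] L, HasDerivAt F (F' s) s) (hg : ∀ᶠ s in 𝓝[<] L, HasDerivAt g (g' s) s)
    (hneg : ∀ᶠ s in 𝓝[<] L, g' s < 0) (hF0 : Tendsto F (𝓝[<] L) (𝓝 0))
    (hg0 : Tendsto g (𝓝[<] L) (𝓝 0)) (hy : Tendsto (fun s ↦ (g' s)⁻¹ • F' s) (𝓝[<] L) (𝓝 y)) :
    Tendsto (fun s ↦ (g s)⁻¹ • F s) (𝓝[<] L) (𝓝 y) := by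
  refine Metric.nhds_basis_closedBall.tendsto_right_iff.2 fun ε hε ↦ ?_
  have hball := hy.eventually (Metric.closedBall_mem_nhds y hε)
  obtain ⟨a, ha, hsub⟩ := mem_nhdsLT_iff_exists_Ioo_subset.1 (hF.and (hg.and (hneg.and hball)))
  have hdiff : ∀ s ∈ Set.Ioo a L, ‖F s - g s • y‖ ≤ ε * g s := fun s hs ↦ by
    refine norm_le_of_norm_deriv_le_neg_deriv (F := fun t ↦ F t - g t • y)
      (fun t ht ↦ (hsub ht).1.sub ((hsub ht).2.1.smul_const y))
      (fun t ht ↦ (hsub ht).2.1.const_mul ε) (fun t ht ↦ ?_) ?_ ?_ hs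
    · obtain ⟨-, -, hnegt, hyt⟩ := hsub ht
      calc ‖F' t - g' t • y‖ = -g' t * ‖(g' t)⁻¹ • F' t - y‖ := by
            rw [← abs_of_neg hnegt, ← Real.norm_eq_abs, ← norm_smul, smul_sub,
              smul_inv_smul₀ hnegt.ne]
        _ ≤ -g' t * ε :=
            mul_le_mul_of_nonneg_left (mem_closedBall_iff_norm.1 hyt) (neg_nonneg.2 hnegt.le)
        _ = -(ε * g' t) := by ring
    · simpa using hF0.sub (hg0.smul_const y)
    · simpa using hg0.const_mul ε
  filter_upwards [Ioo_mem_nhdsLT ha, eventually_pos_of_deriv_neg_of_tendsto_zero hg hneg hg0]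
    with s hs hpos
  rw [mem_closedBall_iff_norm]
  calc ‖(g s)⁻¹ • F s - y‖ = (g s)⁻¹ * ‖F s - g s • y‖ := by
        rw [← norm_smul_of_nonneg (inv_nonneg.2 hpos.le), smul_sub, inv_smul_smul₀ hpos.ne']
    _ ≤ (g s)⁻¹ * (ε * g s) := by gcongr; exact hdiff s hs
    _ = ε := by field_simp

theorem tendsto_normalize_of_deriv_tendsto {γ γ' : ℝ → G} {w : G}
    (hγ : ∀ᶠ s in 𝓝[<] L, HasDerivAt γ (γ' s) s) (hγ0 : Tendsto γ (𝓝[<] L) (𝓝 0))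
    (hw : Tendsto γ' (𝓝[<] L) (𝓝 w)) (hw0 : w ≠ 0) :
    Tendsto (fun s ↦ NormedSpace.normalize (γ s)) (𝓝[<] L) (𝓝 (-NormedSpace.normalize w)) := by
  have hsub : Tendsto (fun s ↦ L - s) (𝓝[<] L) (𝓝 0) :=
    ((continuous_sub_left L).tendsto' L 0 (sub_self L)).mono_left nhdsWithin_le_nhds
  have hquot : Tendsto (fun s ↦ (L - s)⁻¹ • γ s) (𝓝[<] L) (𝓝 (-w)) :=
    vector_lhopital_zero_nhdsLT hγ (.of_forall fun s ↦ (hasDerivAt_id s).const_sub L)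
      (.of_forall fun _ ↦ neg_one_lt_zero) hγ0 hsub (by simpa [inv_neg] using hw.neg)
  rw [← NormedSpace.normalize_neg]
  refine ((continuousAt_normalize (neg_ne_zero.2 hw0)).tendsto.comp hquot).congr' ?_
  filter_upwards [self_mem_nhdsWithin] with s hs
  exact NormedSpace.normalize_smul_of_pos (inv_pos.2 (sub_pos.2 hs)) _

variable {E : Type*} [NormedAddCommGroup E] [InnerProductSpace ℝ E]

theorem hasDerivAt_norm_rpow_comp {γ : ℝ → E} {γ' : E} {s : ℝ} (hγ : HasDerivAt γ γ' s)
    (h0 : γ s ≠ 0) (p : ℝ) :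
    HasDerivAt (fun t ↦ ‖γ t‖ ^ p)
      (p * ‖γ s‖ ^ (p - 1) * ⟪NormedSpace.normalize (γ s), γ'⟫) s := by
  have hnorm : HasDerivAt (fun t ↦ ‖γ t‖) ⟪NormedSpace.normalize (γ s), γ'⟫ s := by
    have hsqrt := hγ.norm_sq.sqrt (by simpa using h0)
    simp only [Real.sqrt_sq (norm_nonneg _)] at hsqrt
    convert hsqrt using 1
    rw [NormedSpace.normalize, real_inner_smul_left]
    field_simp
  convert hnorm.rpow_const (p := p) (.inl (norm_ne_zero_iff.2 h0)) using 1
  ring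

theorem tendsto_norm_rpow_inv_smul_of_deriv {γ γ' : ℝ → E} {F F' : ℝ → G} {ν : E} {y : G} {p : ℝ}
    (hγ : ∀ᶠ s in 𝓝[<] L, HasDerivAt γ (γ' s) s) (hγ0 : Tendsto γ (𝓝[<] L) (𝓝 0))
    (hν : Tendsto (fun s ↦ NormedSpace.normalize (γ s)) (𝓝[<] L) (𝓝 ν)) (hν1 : ‖ν‖ = 1)
    (hγ' : Tendsto γ' (𝓝[<] L) (𝓝 (-ν))) (hp : 0 < p)
    (hF : ∀ᶠ s in 𝓝[<] L, HasDerivAt F (F' s) s) (hF0 : Tendsto F (𝓝[<] L) (𝓝 0))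
    (hy : Tendsto (fun s ↦ (‖γ s‖ ^ (p - 1))⁻¹ • F' s) (𝓝[<] L) (𝓝 y)) :
    Tendsto (fun s ↦ (‖γ s‖ ^ p)⁻¹ • F s) (𝓝[<] L) (𝓝 (-p⁻¹ • y)) := by
  have hne : ∀ᶠ s in 𝓝[<] L, γ s ≠ 0 := by
    filter_upwards [hν.eventually_ne (norm_ne_zero_iff.1 (by simp [hν1]))] with s hs
    simpa using hs
  have hradial : Tendsto (fun s ↦ ⟪NormedSpace.normalize (γ s), γ' s⟫) (𝓝[<] L) (𝓝 (-1)) := by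
    simpa [hν1] using hν.inner (𝕜 := ℝ) hγ'
  refine vector_lhopital_zero_nhdsLT hF
    ((hγ.and hne).mono fun s hs ↦ hasDerivAt_norm_rpow_comp hs.1 hs.2 p) ?_ hF0 ?_ ?_
  · filter_upwards [hne, hradial.eventually_lt_const neg_one_lt_zero] with s hs hneg
    exact mul_neg_of_pos_of_neg
      (mul_pos hp (Real.rpow_pos_of_pos (norm_pos_iff.2 hs) _)) hneg
  · simpa [Real.zero_rpow hp.ne'] using hγ0.norm.rpow_const (p := p) (.inr hp.le)
  · have hlim := ((hradial.const_mul p).inv₀ (by simpa using hp.ne')).smul hy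
    rw [mul_neg_one, inv_neg] at hlim
    refine hlim.congr fun s ↦ ?_
    rw [smul_smul, ← mul_inv]
    ring_nf

end LHopital

section Hessian

open scoped Gradient

variable {E : Type*} [NormedAddCommGroup E] [InnerProductSpace ℝ E]

theorem isSymmetric_of_tendsto {α : Type*} {l : Filter α} [l.NeBot] {T : α → E →L[ℝ] E}
    {T₀ : E →L[ℝ] E} (hT : ∀ᶠ a in l, (T a : E →ₗ[ℝ] E).IsSymmetric) (hlim : Tendsto T l (𝓝 T₀)) :
    (T₀ : E →ₗ[ℝ] E).IsSymmetric := fun u v ↦ by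
  have happly (x : E) : Tendsto (T · x) l (𝓝 (T₀ x)) :=
    ((ContinuousLinearMap.apply ℝ E x).continuous.tendsto T₀).comp hlim
  refine tendsto_nhds_unique_of_eventuallyEq ((happly u).inner tendsto_const_nhds)
    (tendsto_const_nhds.inner (happly v)) ?_
  filter_upwards [hT] with a ha using ha u v

variable [CompleteSpace E] {f : E → ℝ} {x : E}

theorem analyticAt_gradient (hf : AnalyticAt ℝ f x) : AnalyticAt ℝ (∇ f) x :=
  let vectorOfDual : StrongDual ℝ E →L[ℝ] E :=
    (InnerProductSpace.toDual ℝ E).symm.toContinuousLinearEquiv.toContinuousLinearMap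
  (vectorOfDual.analyticAt _).comp hf.fderiv

theorem inner_fderiv_gradient_left (hf : DifferentiableAt ℝ (∇ f) x) (u v : E) :
    ⟪fderiv ℝ (∇ f) x u, v⟫ = fderiv ℝ (fderiv ℝ f) x u v := by
  have hderiv : HasFDerivAt (fderiv ℝ f) ((innerSL ℝ).comp (fderiv ℝ (∇ f) x)) x := by
    rw [← toDual_comp_gradient]
    exact (innerSL ℝ).hasFDerivAt.comp x hf.hasFDerivAt
  simp [hderiv.fderiv]

theorem isSymmetric_fderiv_gradient (hf : AnalyticAt ℝ f x) :
    (fderiv ℝ (∇ f) x : E →ₗ[ℝ] E).IsSymmetric := fun u v ↦ by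
  have hdiff := (analyticAt_gradient hf).differentiableAt
  have hsymm : IsSymmSndFDerivAt ℝ f x := (hf.contDiffAt (n := 2)).isSymmSndFDerivAt (by simp)
  calc ⟪fderiv ℝ (∇ f) x u, v⟫ = fderiv ℝ (fderiv ℝ f) x v u := by
        rw [inner_fderiv_gradient_left hdiff, hsymm u v]
    _ = ⟪u, fderiv ℝ (∇ f) x v⟫ := by rw [← inner_fderiv_gradient_left hdiff, real_inner_comm]

end Hessian

section Trajectory

variable {E : Type*} [NormedAddCommGroup E] [NormedSpace ℝ E] {γ : ℝ → E} {L : ℝ} {p : E}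

/-- The half-trajectory `γ`, approaching `p` as `s → L` from the left, is non-oscillating at `p`:
every function analytic near `p` either vanishes or does not vanish all along the end of `γ`. -/
def IsNonOscillating (γ : ℝ → E) (L : ℝ) (p : E) : Prop :=
  ∀ g : E → ℝ, AnalyticAt ℝ g p →
    (∀ᶠ s in 𝓝[<] L, g (γ s) = 0) ∨ ∀ᶠ s in 𝓝[<] L, g (γ s) ≠ 0

theorem eventually_neg_or_pos_nhdsLT {v : ℝ → ℝ} (hv : ∀ᶠ s in 𝓝[<] L, ContinuousAt v s)
    (h0 : ∀ᶠ s in 𝓝[<] L, v s ≠ 0) :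
    (∀ᶠ s in 𝓝[<] L, v s < 0) ∨ ∀ᶠ s in 𝓝[<] L, 0 < v s := by
  obtain ⟨a, ha, hsub⟩ := mem_nhdsLT_iff_exists_Ioo_subset.1 (hv.and h0)
  have hcont : ContinuousOn v (Set.Ioo a L) := fun s hs ↦ (hsub hs).1.continuousWithinAt
  by_contra! hcon
  obtain ⟨hnonneg, hnonpos⟩ := hcon
  have hmem : ∀ᶠ s in 𝓝[<] L, s ∈ Set.Ioo a L := Ioo_mem_nhdsLT ha
  obtain ⟨s, hs, hsI⟩ := (hnonneg.and_eventually hmem).exists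
  obtain ⟨t, ht, htI⟩ := (hnonpos.and_eventually hmem).exists
  obtain ⟨r, hrI, hr⟩ := isPreconnected_Ioo.intermediate_value htI hsI hcont ⟨ht, hs⟩
  exact (hsub hrI).2 hr

namespace IsNonOscillating

theorem eventually_nonpos_or_nonneg (hosc : IsNonOscillating γ L p)
    (hγ : Tendsto γ (𝓝[<] L) (𝓝 p)) (hcont : ∀ᶠ s in 𝓝[<] L, ContinuousAt γ s) {g : E → ℝ}
    (hg : AnalyticAt ℝ g p) :
    (∀ᶠ s in 𝓝[<] L, g (γ s) ≤ 0) ∨ ∀ᶠ s in 𝓝[<] L, 0 ≤ g (γ s) := by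
  rcases hosc g hg with hzero | hne
  · exact .inl (hzero.mono fun _ hs ↦ hs.le)
  · have hgγ : ∀ᶠ s in 𝓝[<] L, ContinuousAt (fun s ↦ g (γ s)) s := by
      filter_upwards [hγ.eventually hg.eventually_continuousAt, hcont] with s hgs hs
      exact hgs.comp hs
    exact (eventually_neg_or_pos_nhdsLT hgγ hne).imp (·.mono fun _ ↦ le_of_lt)
      (·.mono fun _ ↦ le_of_lt)

variable {G : Type*} [NormedAddCommGroup G] [NormedSpace ℝ G] [FiniteDimensional ℝ G] {F : E → G}

theorem exists_tendsto_normalize (hosc : IsNonOscillating γ L p)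
    (hγ : Tendsto γ (𝓝[<] L) (𝓝 p)) (hcont : ∀ᶠ s in 𝓝[<] L, ContinuousAt γ s)
    (hF : AnalyticAt ℝ F p) (hne : ∀ᶠ s in 𝓝[<] L, F (γ s) ≠ 0) :
    ∃ u, Tendsto (fun s ↦ NormedSpace.normalize (F (γ s))) (𝓝[<] L) (𝓝 u) :=
  exists_tendsto_normalize_of_dual_sign hne fun φ ↦
    hosc.eventually_nonpos_or_nonneg hγ hcont ((φ.analyticAt _).comp hF)

theorem exists_tendsto_smul (hosc : IsNonOscillating γ L p) (hγ : Tendsto γ (𝓝[<] L) (𝓝 p))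
    (hcont : ∀ᶠ s in 𝓝[<] L, ContinuousAt γ s) (hF : AnalyticAt ℝ F p) {a : ℝ → ℝ} {c : ℝ}
    (hc : Tendsto (fun s ↦ a s * ‖F (γ s)‖) (𝓝[<] L) (𝓝 c)) :
    ∃ A, Tendsto (fun s ↦ a s • F (γ s)) (𝓝[<] L) (𝓝 A) := by
  rcases eq_or_ne c 0 with rfl | hc0
  · refine ⟨0, tendsto_zero_iff_norm_tendsto_zero.2 ?_⟩
    simpa [norm_smul] using hc.norm
  · have hne : ∀ᶠ s in 𝓝[<] L, F (γ s) ≠ 0 := by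
      filter_upwards [hc.eventually_ne hc0] with s hs
      exact norm_ne_zero_iff.1 (right_ne_zero_of_mul hs)
    obtain ⟨u, hu⟩ := hosc.exists_tendsto_normalize hγ hcont hF hne
    refine ⟨c • u, (hc.smul hu).congr fun s ↦ ?_⟩
    rw [mul_smul, NormedSpace.norm_smul_normalize]

end IsNonOscillating

end Trajectory

section GradientTrajectory

open scoped Gradient

variable {E : Type*} [NormedAddCommGroup E] [InnerProductSpace ℝ E]

/-- The end of a half-trajectory of the unit gradient field of `f` that reaches the origin in
finite length `L`. Only germs at `L` matter, so all conditions are imposed for `s < L` close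
to `L`. -/
structure IsUnitGradientTrajectory [CompleteSpace E] (f : E → ℝ) (γ : ℝ → E) (L : ℝ) : Prop where
  gradient_ne_zero : ∀ᶠ s in 𝓝[<] L, ∇ f (γ s) ≠ 0
  hasDerivAt : ∀ᶠ s in 𝓝[<] L, HasDerivAt γ (NormedSpace.normalize (∇ f (γ s))) s
  tendsto_zero : Tendsto γ (𝓝[<] L) (𝓝 0)

namespace IsUnitGradientTrajectory

variable {f : E → ℝ} {γ : ℝ → E} {L : ℝ}

theorem eventually_continuousAt [CompleteSpace E] (hγ : IsUnitGradientTrajectory f γ L) :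
    ∀ᶠ s in 𝓝[<] L, ContinuousAt γ s :=
  hγ.hasDerivAt.mono fun _ hs ↦ hs.continuousAt

theorem eventually_ne_zero [CompleteSpace E] (hγ : IsUnitGradientTrajectory f γ L)
    (hf0 : ∇ f 0 = 0) : ∀ᶠ s in 𝓝[<] L, γ s ≠ 0 :=
  hγ.gradient_ne_zero.mono fun _ hs h0 ↦ hs (by rw [h0, hf0])

variable [FiniteDimensional ℝ E] {ν : E} {m β : ℝ} {A : E →L[ℝ] E}

theorem tendsto_normalize_gradient (hγ : IsUnitGradientTrajectory f γ L)
    (hf : AnalyticAt ℝ f 0) (hosc : IsNonOscillating γ L 0)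
    (hν : Tendsto (fun s ↦ NormedSpace.normalize (γ s)) (𝓝[<] L) (𝓝 ν)) :
    Tendsto (fun s ↦ NormedSpace.normalize (∇ f (γ s))) (𝓝[<] L) (𝓝 (-ν)) := by
  obtain ⟨w, hw⟩ := hosc.exists_tendsto_normalize hγ.tendsto_zero hγ.eventually_continuousAt
    (analyticAt_gradient hf) hγ.gradient_ne_zero
  have hw1 : ‖w‖ = 1 := norm_eq_one_of_tendsto_normalize hγ.gradient_ne_zero hw
  have hsecant := tendsto_normalize_of_deriv_tendsto hγ.hasDerivAt hγ.tendsto_zero hw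
    (norm_ne_zero_iff.1 (by simp [hw1]))
  rw [NormedSpace.normalize_eq_self_of_norm_eq_one hw1] at hsecant
  rwa [tendsto_nhds_unique hν hsecant, neg_neg]

theorem exists_tendsto_rescaled_hessian (hγ : IsUnitGradientTrajectory f γ L)
    (hf : AnalyticAt ℝ f 0) (hosc : IsNonOscillating γ L 0) {c : ℝ}
    (hc : Tendsto (fun s ↦ ‖γ s‖ ^ (2 - m) * ‖fderiv ℝ (∇ f) (γ s)‖) (𝓝[<] L) (𝓝 c)) :
    ∃ A, Tendsto (fun s ↦ (‖γ s‖ ^ (m - 2))⁻¹ • fderiv ℝ (∇ f) (γ s)) (𝓝[<] L) (𝓝 A) := by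
  simp only [← Real.rpow_neg (norm_nonneg _), neg_sub]
  exact hosc.exists_tendsto_smul hγ.tendsto_zero hγ.eventually_continuousAt
    (analyticAt_gradient hf).fderiv hc

theorem tendsto_rescaled_gradient (hγ : IsUnitGradientTrajectory f γ L)
    (hf : AnalyticAt ℝ f 0) (hf0 : ∇ f 0 = 0) (hosc : IsNonOscillating γ L 0)
    (hν : Tendsto (fun s ↦ NormedSpace.normalize (γ s)) (𝓝[<] L) (𝓝 ν)) (hm : 1 < m)
    (hA : Tendsto (fun s ↦ (‖γ s‖ ^ (m - 2))⁻¹ • fderiv ℝ (∇ f) (γ s)) (𝓝[<] L) (𝓝 A)) :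
    Tendsto (fun s ↦ (‖γ s‖ ^ (m - 1))⁻¹ • ∇ f (γ s)) (𝓝[<] L) (𝓝 ((m - 1)⁻¹ • A ν)) := by
  have hgrad := analyticAt_gradient hf
  have hvel := hγ.tendsto_normalize_gradient hf hosc hν
  have hderiv : ∀ᶠ s in 𝓝[<] L, HasDerivAt (fun s ↦ ∇ f (γ s))
      (fderiv ℝ (∇ f) (γ s) (NormedSpace.normalize (∇ f (γ s)))) s := by
    filter_upwards [hγ.tendsto_zero.eventually hgrad.eventually_analyticAt, hγ.hasDerivAt]
      with s hgs hs
    exact hgs.differentiableAt.hasFDerivAt.comp_hasDerivAt s hs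
  have happly : Tendsto (fun s ↦ (‖γ s‖ ^ (m - 1 - 1))⁻¹ •
      fderiv ℝ (∇ f) (γ s) (NormedSpace.normalize (∇ f (γ s)))) (𝓝[<] L) (𝓝 (A (-ν))) := by
    rw [show m - 1 - 1 = m - 2 by ring]
    exact (isBoundedBilinearMap_apply.continuous.tendsto (A, -ν)).comp (hA.prodMk_nhds hvel)
  have hlim := tendsto_norm_rpow_inv_smul_of_deriv hγ.hasDerivAt hγ.tendsto_zero hν
    (norm_eq_one_of_tendsto_normalize (hγ.eventually_ne_zero hf0) hν) hvel (sub_pos.2 hm) hderiv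
    (hgrad.continuousAt.tendsto.comp hγ.tendsto_zero |>.trans_eq (by rw [hf0])) happly
  simpa using hlim

theorem rescaled_hessian_limit_apply_secant (hγ : IsUnitGradientTrajectory f γ L)
    (hf : AnalyticAt ℝ f 0) (hf0 : ∇ f 0 = 0) (hosc : IsNonOscillating γ L 0)
    (hν : Tendsto (fun s ↦ NormedSpace.normalize (γ s)) (𝓝[<] L) (𝓝 ν)) (hm : 1 < m)
    (hradial : (fun s ↦ ⟪∇ f (γ s), NormedSpace.normalize (γ s)⟫ + m * β * ‖γ s‖ ^ (m - 1))
      =o[𝓝[<] L] fun s ↦ ‖γ s‖ ^ (m - 1))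
    (hA : Tendsto (fun s ↦ (‖γ s‖ ^ (m - 2))⁻¹ • fderiv ℝ (∇ f) (γ s)) (𝓝[<] L) (𝓝 A)) :
    A ν = (m * (m - 1)) • -β • ν := by
  have hpow : ∀ᶠ s in 𝓝[<] L, 0 < ‖γ s‖ ^ (m - 1) := (hγ.eventually_ne_zero hf0).mono
    fun s hs ↦ Real.rpow_pos_of_pos (norm_pos_iff.2 hs) _
  have hz := hγ.tendsto_rescaled_gradient hf hf0 hosc hν hm hA
  set z := (m - 1)⁻¹ • A ν with hz_def
  have hz_dir : z = ‖z‖ • -ν := eq_norm_smul_of_tendsto_normalize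
    (hpow.mono fun _ ↦ inv_pos.2) (hγ.tendsto_normalize_gradient hf hosc hν) hz
  have hz_radial : ⟪z, ν⟫ = -(m * β) := by
    have hlim := hradial.tendsto_div_nhds_zero.sub_const (m * β)
    rw [zero_sub] at hlim
    refine tendsto_nhds_unique (hz.inner hν) (hlim.congr' ?_)
    filter_upwards [hpow] with s hs
    rw [real_inner_smul_left, add_div, mul_div_cancel_right₀ _ hs.ne', add_sub_cancel_right,
      div_eq_inv_mul]
  have hz_norm : ‖z‖ = m * β := by
    have hν1 : ‖ν‖ = 1 := norm_eq_one_of_tendsto_normalize (hγ.eventually_ne_zero hf0) hν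
    rw [hz_dir, real_inner_smul_left, inner_neg_left, real_inner_self_eq_norm_sq, hν1] at hz_radial
    linarith
  calc A ν = (m - 1) • z := by rw [hz_def, smul_inv_smul₀ (sub_pos.2 hm).ne']
    _ = (m * (m - 1)) • -β • ν := by rw [hz_dir, hz_norm]; module

end IsUnitGradientTrajectory

theorem rescaled_hessian_limit_eigenvalue_neg_beta_general [FiniteDimensional ℝ E] {f : E → ℝ}
    (hf : AnalyticAt ℝ f 0) (hf0 : ∇ f 0 = 0) {γ : ℝ → E} {L : ℝ}
    (hγ : IsUnitGradientTrajectory f γ L) (hosc : IsNonOscillating γ L 0) {ν : E}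
    (hν : Tendsto (fun s ↦ NormedSpace.normalize (γ s)) (𝓝[<] L) (𝓝 ν)) {m β : ℝ} (hm : 1 < m)
    (hβ : β ≠ 0)
    (hradial : (fun s ↦ ⟪∇ f (γ s), NormedSpace.normalize (γ s)⟫ + m * β * ‖γ s‖ ^ (m - 1))
      =o[𝓝[<] L] fun s ↦ ‖γ s‖ ^ (m - 1)) {c : ℝ}
    (hc : Tendsto (fun s ↦ ‖γ s‖ ^ (2 - m) * ‖fderiv ℝ (∇ f) (γ s)‖) (𝓝[<] L) (𝓝 c)) :
    ∃ H₀ : E →L[ℝ] E, H₀ ≠ 0 ∧ (H₀ : E →ₗ[ℝ] E).IsSymmetric ∧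
      Tendsto (fun s ↦ (m * (m - 1) * ‖γ s‖ ^ (m - 2))⁻¹ • fderiv ℝ (∇ f) (γ s))
        (𝓝[<] L) (𝓝 H₀) ∧
      H₀ ν = (-β) • ν := by
  obtain ⟨A, hA⟩ := hγ.exists_tendsto_rescaled_hessian hf hosc hc
  have hlim : Tendsto (fun s ↦ (m * (m - 1) * ‖γ s‖ ^ (m - 2))⁻¹ • fderiv ℝ (∇ f) (γ s))
      (𝓝[<] L) (𝓝 ((m * (m - 1))⁻¹ • A)) := by
    simpa only [mul_inv (m * (m - 1)), mul_smul] using hA.const_smul (m * (m - 1))⁻¹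
  have heig : ((m * (m - 1))⁻¹ • A) ν = (-β) • ν := by
    rw [smul_apply, hγ.rescaled_hessian_limit_apply_secant hf hf0 hosc hν hm hradial hA,
      inv_smul_smul₀ (mul_pos (zero_lt_one.trans hm) (sub_pos.2 hm)).ne']
  refine ⟨_, fun h0 ↦ ?_, isSymmetric_of_tendsto ?_ hlim, hlim, heig⟩
  · have hν0 : ν ≠ 0 := norm_ne_zero_iff.1 <| by
      simp [norm_eq_one_of_tendsto_normalize (hγ.eventually_ne_zero hf0) hν]
    rw [h0, zero_apply] at heig
    exact smul_ne_zero (neg_ne_zero.2 hβ) hν0 heig.symm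
  · filter_upwards [hγ.tendsto_zero.eventually hf.eventually_analyticAt] with s hs
    exact (isSymmetric_fderiv_gradient hs).smul (by simp)

end GradientTrajectory

/-- if moreover `|x|^{2-m}‖Hs(f)(x)‖` converges to a positive limit along the
trajectory, then `(m(m-1)|x|^{m-2})⁻¹·Hs(f)(x)` converges to a nonzero self-adjoint operator
`𝓗₀` with `𝓗₀·ν = -β·ν`. -/
theorem rescaled_hessian_limit_eigenvalue_neg_beta
    {n : ℕ} (hn : 2 ≤ n)
    (U : Set (EuclideanSpace ℝ (Fin n))) (hUopen : IsOpen U)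
    (hOU : (0 : EuclideanSpace ℝ (Fin n)) ∈ U)
    (f : EuclideanSpace ℝ (Fin n) → ℝ)
    (hfan : AnalyticOnNhd ℝ f U) (hf0 : f 0 = 0) (hgf0 : gradient f 0 = 0)
    (L : ℝ) (hL : 0 < L)
    (γ : ℝ → EuclideanSpace ℝ (Fin n))
    (hγU : ∀ s ∈ Set.Ico (0 : ℝ) L, γ s ∈ U)
    (hγreg : ∀ s ∈ Set.Ico (0 : ℝ) L, gradient f (γ s) ≠ 0)
    (hγode : ∀ s ∈ Set.Ico (0 : ℝ) L,
      HasDerivAt γ (‖gradient f (γ s)‖⁻¹ • gradient f (γ s)) s)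
    (hfneg : f (γ 0) < 0)
    (hfmono : StrictMonoOn (fun s => f (γ s)) (Set.Ico (0 : ℝ) L))
    (hγlim : Tendsto γ (𝓝[<] L) (𝓝 0))
    (hosc : ∀ g : EuclideanSpace ℝ (Fin n) → ℝ, AnalyticAt ℝ g 0 →
      (∀ᶠ s in 𝓝[<] L, g (γ s) = 0) ∨ (∀ᶠ s in 𝓝[<] L, g (γ s) ≠ 0))
    (ν : EuclideanSpace ℝ (Fin n)) (hν1 : ‖ν‖ = 1)
    (hνlim : Tendsto (fun s => ‖γ s‖⁻¹ • γ s) (𝓝[<] L) (𝓝 ν))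
    (m : ℝ) (hm : 1 < m) (hmQ : ∃ q : ℚ, m = (q : ℝ)) (β : ℝ) (hβ : 0 < β)
    (hKMP1 : (fun s => f (γ s) + β * ‖γ s‖ ^ m) =o[𝓝[<] L] fun s => ‖γ s‖ ^ m)
    (hKMP2 : (fun s => ⟪gradient f (γ s), ‖γ s‖⁻¹ • γ s⟫ + m * β * ‖γ s‖ ^ (m - 1))
      =o[𝓝[<] L] fun s => ‖γ s‖ ^ (m - 1))
    (c : ℝ) (hc : 0 < c)
    (hconv : Tendsto (fun s => ‖γ s‖ ^ ((2 : ℝ) - m) * ‖fderiv ℝ (gradient f) (γ s)‖)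
      (𝓝[<] L) (𝓝 c)) :
    ∃ H₀ : EuclideanSpace ℝ (Fin n) →L[ℝ] EuclideanSpace ℝ (Fin n),
      H₀ ≠ 0 ∧ (∀ u v : EuclideanSpace ℝ (Fin n), ⟪H₀ u, v⟫ = ⟪u, H₀ v⟫) ∧
      Tendsto (fun s => (m * (m - 1) * ‖γ s‖ ^ (m - 2))⁻¹ • fderiv ℝ (gradient f) (γ s))
        (𝓝[<] L) (𝓝 H₀) ∧
      H₀ ν = (-β) • ν := by
  have hI : ∀ᶠ s in 𝓝[<] L, s ∈ Set.Ico 0 L := Ico_mem_nhdsLT hL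
  exact rescaled_hessian_limit_eigenvalue_neg_beta_general (hfan 0 hOU) hgf0
    ⟨hI.mono hγreg, hI.mono hγode, hγlim⟩ hosc hνlim hm hβ.ne' hKMP2 hconv
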